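/- arXiv:2307.02415 — 3 statements merged into one kernel-verified Lean document; each statement's English description precedes it below -/
import Mathlib

section
/- Let χ be a partial (Δ+1)-edge-coloring of G and let (v,x₀) be an uncolored edge. Then there exist a fan F = (v, x₀, …, x_t) with respect to χ and a color c₁ ∈ M(x_t) such that F is primed by c₁. -/
namespace EC

/-- A partial `k`-edge-coloring of `G`. -/
def IsPartialColoring {V : Type*} (G : SimpleGraph V) (k : ℕ)
    (χ : Sym2 V → Option (Fin k)) : Prop :=
  (∀ e, e ∉ G.edgeSet → χ e = none) ∧
  ∀ e f : Sym2 V, e ≠ f → (∃ v : V, v ∈ e ∧ v ∈ f) →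
    ∀ c : Fin k, χ e = some c → χ f ≠ some c

/-- The set `M(v)` of missing colors at a vertex `v`. -/
def missing {V : Type*} {k : ℕ} (χ : Sym2 V → Option (Fin k)) (v : V) : Set (Fin k) :=
  {c | ∀ w : V, χ s(v, w) ≠ some c}

/-- A fan `F = (v, x 0, …, x t)` with respect to `χ`: the `x i` (for `i ≤ t`) are distinct
neighbors of `v`, the edge `(v, x 0)` is uncolored, the edge `(v, x i)` is colored for
`1 ≤ i ≤ t`, and its color is missing at `x (i-1)`. -/
def IsFan {V : Type*} (G : SimpleGraph V) {k : ℕ} (χ : Sym2 V → Option (Fin k))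
    (v : V) (t : ℕ) (x : ℕ → V) : Prop :=
  (∀ i ≤ t, G.Adj v (x i)) ∧
  (∀ i ≤ t, ∀ j ≤ t, x i = x j → i = j) ∧
  χ s(v, x 0) = none ∧
  (∀ i, 1 ≤ i → i ≤ t → χ s(v, x i) ≠ none ∧
    ∀ c : Fin k, χ s(v, x i) = some c → c ∈ missing χ (x (i - 1)))

/-- The fan `F = (v, x 0, …, x t)` is primed by the color `c₁` if `c₁ ∈ M(x t)` and either
`c₁ ∈ M(v)` or `c₁ ∈ M(x j)` for some `j < t`. -/
def Primed {V : Type*} {k : ℕ} (χ : Sym2 V → Option (Fin k))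
    (v : V) (t : ℕ) (x : ℕ → V) (c₁ : Fin k) : Prop :=
  c₁ ∈ missing χ (x t) ∧ (c₁ ∈ missing χ v ∨ ∃ j < t, c₁ ∈ missing χ (x j))

/-!
A fan `(v, x₀, …, x_t)` in which some color `c` missing at `x_t` is not already priming can be
prolonged: `c` appears at `v`, on an edge `(v, w)` say, and `w` is a new leaf, since `w = x_i` would
put `c` into `M(x_{i-1})`. The edges `(v, x₁), …, (v, x_t)` carry distinct colors, so `t` is at most
the number of colors and the prolongation must stop at a primed fan.
-/

section

variable {V : Type*} {G : SimpleGraph V} {k : ℕ} {χ : Sym2 V → Option (Fin k)}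

theorem notMem_missing_iff {u : V} {c : Fin k} :
    c ∉ missing χ u ↔ ∃ w, χ s(u, w) = some c := by
  simp only [missing, Set.mem_ofPred_eq, not_forall, not_not]

namespace IsPartialColoring

theorem adj_of_eq_some (hχ : IsPartialColoring G k χ) {u w : V} {c : Fin k}
    (hc : χ s(u, w) = some c) : G.Adj u w := by
  by_contra hadj
  have huncolored : χ s(u, w) = none := hχ.1 _ hadj
  simp [huncolored] at hc

theorem eq_of_eq_some (hχ : IsPartialColoring G k χ) {u w w' : V} {c : Fin k}
    (hw : χ s(u, w) = some c) (hw' : χ s(u, w') = some c) : w = w' := by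
  by_contra hne
  exact hχ.2 s(u, w) s(u, w') (fun h ↦ hne (Sym2.congr_right.1 h))
    ⟨u, Sym2.mem_mk_left u w, Sym2.mem_mk_left u w'⟩ c hw hw'

theorem missing_nonempty_of_degree_lt (hχ : IsPartialColoring G k χ) {u : V}
    [Fintype (G.neighborSet u)] (hdeg : G.degree u < k) : (missing χ u).Nonempty := by
  by_contra hempty
  have hused (c : Fin k) : ∃ w, χ s(u, w) = some c :=
    notMem_missing_iff.1 fun hc ↦ hempty ⟨c, hc⟩
  choose w hw using hused
  let neighbor (c : Fin k) : G.neighborSet u := ⟨w c, hχ.adj_of_eq_some (hw c)⟩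
  have hinj : Function.Injective neighbor := fun c d hcd ↦
    Option.some.inj <| by rw [← hw c, ← hw d, Subtype.mk.inj hcd]
  have hle : k ≤ G.degree u := by
    simpa only [Fintype.card_fin, G.card_neighborSet_eq_degree] using
      Fintype.card_le_of_injective neighbor hinj
  exact hdeg.not_ge hle

end IsPartialColoring

theorem isFan_zero {v : V} {x : ℕ → V} (hadj : G.Adj v (x 0)) (hun : χ s(v, x 0) = none) :
    IsFan G χ v 0 x := by
  refine ⟨fun i hi ↦ ?_, fun i hi j hj _ ↦ by omega, hun, fun i hi hi' ↦ by omega⟩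
  rwa [Nat.le_zero.1 hi]

namespace IsFan

variable {v : V} {t : ℕ} {x : ℕ → V}

theorem length_le (hχ : IsPartialColoring G k χ) (hF : IsFan G χ v t x) : t ≤ k := by
  obtain ⟨-, hdistinct, -, hcolored⟩ := hF
  have hcolor (i : Fin t) : ∃ c, χ s(v, x (i + 1)) = some c :=
    Option.ne_none_iff_exists'.1 (hcolored (i + 1) (by omega) (by omega)).1
  choose color hcolor using hcolor
  have hinj : Function.Injective color := fun i j hij ↦ by
    have hleaf : x (i + 1) = x (j + 1) := hχ.eq_of_eq_some (hcolor i) (hij ▸ hcolor j)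
    have hindex := hdistinct (i + 1) (by omega) (j + 1) (by omega) hleaf
    omega
  simpa only [Fintype.card_fin] using Fintype.card_le_of_injective color hinj

theorem update_succ (hF : IsFan G χ v t x) {w : V} {c : Fin k} (hadj : G.Adj v w)
    (hnew : ∀ i ≤ t, x i ≠ w) (hw : χ s(v, w) = some c) (hc : c ∈ missing χ (x t)) :
    IsFan G χ v (t + 1) (Function.update x (t + 1) w) := by
  obtain ⟨hadj_leaf, hdistinct, hun, hcolored⟩ := hF
  have hold {i : ℕ} (hi : i ≤ t) : Function.update x (t + 1) w i = x i :=
    Function.update_of_ne (by omega) w x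
  have hlast : Function.update x (t + 1) w (t + 1) = w := Function.update_self ..
  refine ⟨fun i hi ↦ ?_, fun i hi j hj hij ↦ ?_, by rwa [hold t.zero_le], fun i hpos hi ↦ ?_⟩
  · obtain hi | rfl := Nat.le_add_one_iff.1 hi
    · exact hold hi ▸ hadj_leaf i hi
    · exact hlast.symm ▸ hadj
  · obtain hi | rfl := Nat.le_add_one_iff.1 hi <;> obtain hj | rfl := Nat.le_add_one_iff.1 hj
    · exact hdistinct i hi j hj (by rwa [hold hi, hold hj] at hij)
    · exact absurd (by rwa [hold hi, hlast] at hij) (hnew i hi)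
    · exact absurd (by rwa [hold hj, hlast, eq_comm] at hij) (hnew j hj)
    · rfl
  · obtain hi | rfl := Nat.le_add_one_iff.1 hi
    · rw [hold hi, hold (by omega)]
      exact hcolored i hpos hi
    · rw [hlast, Nat.add_sub_cancel, hold le_rfl, hw]
      exact ⟨Option.some_ne_none c, fun d hd ↦ Option.some.inj hd ▸ hc⟩

theorem ne_of_not_primed (hF : IsFan G χ v t x) {w : V} {c : Fin k}
    (hw : χ s(v, w) = some c) (hc : c ∈ missing χ (x t)) (hprimed : ¬ Primed χ v t x c) :
    ∀ i ≤ t, x i ≠ w := by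
  obtain ⟨-, -, hun, hcolored⟩ := hF
  rintro i hi rfl
  obtain rfl | hpos := Nat.eq_zero_or_pos i
  · simp [hun] at hw
  · have hmissing : c ∈ missing χ (x (i - 1)) := (hcolored i hpos hi).2 c hw
    exact hprimed ⟨hc, Or.inr ⟨i - 1, by omega, hmissing⟩⟩

theorem primed_or_exists_update_succ (hχ : IsPartialColoring G k χ) (hF : IsFan G χ v t x)
    {c : Fin k} (hc : c ∈ missing χ (x t)) :
    Primed χ v t x c ∨ ∃ w, IsFan G χ v (t + 1) (Function.update x (t + 1) w) := by
  refine or_iff_not_imp_left.2 fun hprimed ↦ ?_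
  obtain ⟨w, hw⟩ := notMem_missing_iff.1 fun hcv ↦ hprimed ⟨hc, Or.inl hcv⟩
  exact ⟨w, hF.update_succ (hχ.adj_of_eq_some hw) (hF.ne_of_not_primed hw hc hprimed) hw hc⟩

end IsFan

theorem exists_primed_fan_general (hχ : IsPartialColoring G k χ) {v x₀ : V}
    (hmissing : ∀ u, G.Adj v u → (missing χ u).Nonempty)
    (hadj : G.Adj v x₀) (hun : χ s(v, x₀) = none) :
    ∃ (t : ℕ) (x : ℕ → V) (c₁ : Fin k), x 0 = x₀ ∧ IsFan G χ v t x ∧ Primed χ v t x c₁ := by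
  by_contra hnone
  have hfan (t : ℕ) : ∃ x : ℕ → V, x 0 = x₀ ∧ IsFan G χ v t x := by
    induction t with
    | zero => exact ⟨fun _ ↦ x₀, rfl, isFan_zero hadj hun⟩
    | succ t ih =>
      obtain ⟨x, hx₀, hF⟩ := ih
      obtain ⟨c, hc⟩ := hmissing (x t) (hF.1 t le_rfl)
      obtain hprimed | ⟨w, hF'⟩ := hF.primed_or_exists_update_succ hχ hc
      · exact absurd ⟨t, x, c, hx₀, hF, hprimed⟩ hnone
      · exact ⟨_, by rwa [Function.update_of_ne t.succ_ne_zero.symm], hF'⟩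
  obtain ⟨x, -, hF⟩ := hfan (k + 1)
  exact k.not_succ_le_self (hF.length_le hχ)

end

/-- Given a partial `(Δ+1)`-edge-coloring `χ` of `G` and an uncolored edge `(v, x₀)`, there
exist a fan `F = (v, x₀, …, x_t)` with respect to `χ` and a color `c₁ ∈ M(x_t)` such that `F`
is primed by `c₁`. -/
theorem exists_primed_fan {V : Type*} [Fintype V] [DecidableEq V]
    (G : SimpleGraph V) [DecidableRel G.Adj]
    (χ : Sym2 V → Option (Fin (G.maxDegree + 1)))
    (hχ : IsPartialColoring G (G.maxDegree + 1) χ)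
    (v x₀ : V) (hadj : G.Adj v x₀) (hun : χ s(v, x₀) = none) :
    ∃ (t : ℕ) (x : ℕ → V) (c₁ : Fin (G.maxDegree + 1)),
      x 0 = x₀ ∧ IsFan G χ v t x ∧ Primed χ v t x c₁ := by
  exact exists_primed_fan_general hχ
    (fun u _ ↦ hχ.missing_nonempty_of_degree_lt (Nat.lt_succ_of_le (G.degree_le_maxDegree u)))
    hadj hun

end EC
end

section
/- Let χ be a partial k-edge-coloring of G, let c₀, c₁ ∈ {1,…,k} be distinct colors, and let P be a maximal (c₀,c₁)-alternating path. Define χ' by swapping the colors c₀ and c₁ on the edges of P (every edge of P colored c₀ gets color c₁ and vice versa) and χ' = χ on all other edges. Then χ' is a partial k-edge-coloring of G. Moreover, if v is an endpoint of P whose unique P-edge is colored c₀ under χ, then c₀ ∈ M(v) under χ' and c₁ ∉ M(v) under χ'. -/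
namespace EC

/-- A maximal `(c₀,c₁)`-alternating path: a simple path with distinct endpoints all of whose
edges are colored `c₀` or `c₁`, such that each of its two endpoint vertices is incident to
exactly one edge colored `c₀` or `c₁`. -/
def IsMaxAltPath {V : Type*} (G : SimpleGraph V) {k : ℕ} (χ : Sym2 V → Option (Fin k))
    (c₀ c₁ : Fin k) {a b : V} (p : G.Walk a b) : Prop :=
  p.IsPath ∧ a ≠ b ∧
  (∀ e ∈ p.edges, χ e = some c₀ ∨ χ e = some c₁) ∧
  (∃! w : V, χ s(a, w) = some c₀ ∨ χ s(a, w) = some c₁) ∧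
  (∃! w : V, χ s(b, w) = some c₀ ∨ χ s(b, w) = some c₁)

/-!
Every vertex of a maximal `(c₀,c₁)`-alternating path `P` has all its `c₀`- and `c₁`-edges on `P`:
at an inner vertex the two edges of `P` already use up both colors, and at an endpoint this is
maximality. Hence flipping `P` applies the transposition `(c₀ c₁)` to all colors seen at a vertex
of `P`, and changes nothing at any other vertex. Either way the colors at a vertex stay distinct,
and at a vertex of `P` the set of missing colors is transformed by `(c₀ c₁)`.
-/

section KempeSwap

variable {E α : Type*} {χ : E → Option α} {c₀ c₁ : α} {S : Set E} {e : E}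

/-- The edges colored `c₀` or `c₁`, i.e. those of the subgraph whose components are the
`(c₀,c₁)`-Kempe chains. -/
def bichromatic (χ : E → Option α) (c₀ c₁ : α) : Set E :=
  {e | χ e = some c₀ ∨ χ e = some c₁}

variable [DecidableEq α]

open scoped Classical in
/-- The Kempe change on a set `S` of edges: the colors `c₀` and `c₁` are exchanged on `S`. The set
`S` may contain edges with other colors or uncolored ones, which are left alone. -/
noncomputable def kempeSwap (χ : E → Option α) (c₀ c₁ : α) (S : Set E) : E → Option α :=
  S.piecewise (fun e => (χ e).map (Equiv.swap c₀ c₁)) χ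

theorem kempeSwap_of_mem (he : e ∈ S) :
    kempeSwap χ c₀ c₁ S e = (χ e).map (Equiv.swap c₀ c₁) :=
  if_pos he

theorem kempeSwap_of_notMem (he : e ∉ S) : kempeSwap χ c₀ c₁ S e = χ e :=
  if_neg he

theorem map_swap_eq_self_of_notMem_bichromatic (he : e ∉ bichromatic χ c₀ c₁) :
    (χ e).map (Equiv.swap c₀ c₁) = χ e := by
  obtain ⟨h₀, h₁⟩ := not_or.mp he
  cases hχe : χ e with
  | none => rfl
  | some c =>
    rw [hχe, Option.some_inj] at h₀ h₁
    rw [Option.map_some, Equiv.swap_apply_of_ne_of_ne h₀ h₁]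

theorem kempeSwap_eq_map_swap (he : e ∈ bichromatic χ c₀ c₁ → e ∈ S) :
    kempeSwap χ c₀ c₁ S e = (χ e).map (Equiv.swap c₀ c₁) := by
  by_cases heS : e ∈ S
  · exact kempeSwap_of_mem heS
  · rw [kempeSwap_of_notMem heS, map_swap_eq_self_of_notMem_bichromatic (mt he heS)]

theorem kempeSwap_eq_self (he : e ∈ bichromatic χ c₀ c₁ → e ∉ S) :
    kempeSwap χ c₀ c₁ S e = χ e := by
  by_cases heS : e ∈ S
  · rw [kempeSwap_of_mem heS,
      map_swap_eq_self_of_notMem_bichromatic (imp_not_comm.mp he heS)]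
  · exact kempeSwap_of_notMem heS

theorem kempeSwap_eq_some_iff (he : e ∈ bichromatic χ c₀ c₁ → e ∈ S) {c : α} :
    kempeSwap χ c₀ c₁ S e = some c ↔ χ e = some (Equiv.swap c₀ c₁ c) := by
  simp only [kempeSwap_eq_map_swap he, Option.map_eq_some_iff, Equiv.swap_apply_eq_iff,
    exists_eq_right]

theorem kempeSwap_eq_ite [DecidablePred (· ∈ S)] (hS : S ⊆ bichromatic χ c₀ c₁) :
    kempeSwap χ c₀ c₁ S =
      fun e => if e ∈ S then (if χ e = some c₀ then some c₁ else some c₀) else χ e := by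
  funext e
  split_ifs with heS h₀
  · rw [kempeSwap_of_mem heS, h₀, Option.map_some, Equiv.swap_apply_left]
  · rw [kempeSwap_of_mem heS, (hS heS).resolve_left h₀, Option.map_some, Equiv.swap_apply_right]
  · exact kempeSwap_of_notMem heS

end KempeSwap

section Coloring

variable {V : Type*} {G : SimpleGraph V} {k : ℕ} {χ : Sym2 V → Option (Fin k)} {c₀ c₁ : Fin k}
  {S : Set (Sym2 V)} {v : V}

/-- `S` is, as far as edges colored `c₀` or `c₁` are concerned, a union of `(c₀,c₁)`-Kempe chains.
This is phrased locally: at each vertex, either all or none of these edges belong to `S`. -/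
def IsKempeClosed {α : Type*} (χ : Sym2 V → Option α) (c₀ c₁ : α) (S : Set (Sym2 V)) : Prop :=
  ∀ v : V, (∀ e ∈ bichromatic χ c₀ c₁, v ∈ e → e ∈ S) ∨
    (∀ e ∈ bichromatic χ c₀ c₁, v ∈ e → e ∉ S)

theorem IsPartialColoring.kempeSwap (hχ : IsPartialColoring G k χ)
    (hS : IsKempeClosed χ c₀ c₁ S) : IsPartialColoring G k (kempeSwap χ c₀ c₁ S) := by
  obtain ⟨hnone, hproper⟩ := hχ
  refine ⟨fun e he => ?_, ?_⟩
  · have not_bichromatic : e ∉ bichromatic χ c₀ c₁ := by simp [bichromatic, hnone e he]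
    rw [kempeSwap_eq_self (absurd · not_bichromatic), hnone e he]
  · rintro e f hef ⟨v, hve, hvf⟩ c
    rcases hS v with all_mem | none_mem
    · rw [Ne, kempeSwap_eq_some_iff (all_mem e · hve), kempeSwap_eq_some_iff (all_mem f · hvf)]
      exact hproper e f hef ⟨v, hve, hvf⟩ _
    · rw [kempeSwap_eq_self (none_mem e · hve), kempeSwap_eq_self (none_mem f · hvf)]
      exact hproper e f hef ⟨v, hve, hvf⟩ c

theorem mem_missing_kempeSwap_iff (hv : ∀ e ∈ bichromatic χ c₀ c₁, v ∈ e → e ∈ S) {c : Fin k} :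
    c ∈ missing (kempeSwap χ c₀ c₁ S) v ↔ Equiv.swap c₀ c₁ c ∈ missing χ v :=
  forall_congr' fun w =>
    not_congr (kempeSwap_eq_some_iff (hv s(v, w) · (Sym2.mem_mk_left v w)))

theorem notMem_missing_of_eq_some {e : Sym2 V} {c : Fin k} (hve : v ∈ e) (he : χ e = some c) :
    c ∉ missing χ v := by
  obtain ⟨w, rfl⟩ := hve
  exact fun hc => hc w he

theorem mem_and_notMem_missing_kempeSwap (hc : c₀ ≠ c₁)
    (hv : ∀ e ∈ bichromatic χ c₀ c₁, v ∈ e → e ∈ S) (hvS : ∃ e ∈ S, v ∈ e)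
    (hcolor : ∀ e ∈ S, v ∈ e → χ e = some c₀) :
    c₀ ∈ missing (kempeSwap χ c₀ c₁ S) v ∧ c₁ ∉ missing (kempeSwap χ c₀ c₁ S) v := by
  rw [mem_missing_kempeSwap_iff hv, mem_missing_kempeSwap_iff hv, Equiv.swap_apply_left,
    Equiv.swap_apply_right]
  constructor
  · intro w hw
    have hwS : s(v, w) ∈ S := hv _ (Or.inr hw) (Sym2.mem_mk_left v w)
    exact hc (Option.some_inj.mp ((hcolor _ hwS (Sym2.mem_mk_left v w)).symm.trans hw))
  · obtain ⟨e, heS, hve⟩ := hvS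
    exact notMem_missing_of_eq_some hve (hcolor e heS hve)

theorem IsPartialColoring.eq_or_eq_of_mem_bichromatic (hχ : IsPartialColoring G k χ)
    {e f g : Sym2 V} (hve : v ∈ e) (hvf : v ∈ f) (hvg : v ∈ g) (hef : e ≠ f)
    (he : e ∈ bichromatic χ c₀ c₁) (hf : f ∈ bichromatic χ c₀ c₁)
    (hg : g ∈ bichromatic χ c₀ c₁) : g = e ∨ g = f := by
  have eq_of_color_eq {e f : Sym2 V} (hve : v ∈ e) (hvf : v ∈ f) {c : Fin k}
      (he : χ e = some c) (hf : χ f = some c) : e = f :=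
    by_contra fun hne => hχ.2 e f hne ⟨v, hve, hvf⟩ c he hf
  rcases he with he | he <;> rcases hf with hf | hf
  · exact absurd (eq_of_color_eq hve hvf he hf) hef
  · exact hg.imp (eq_of_color_eq hvg hve · he) (eq_of_color_eq hvg hvf · hf)
  · exact hg.symm.imp (eq_of_color_eq hvg hve · he) (eq_of_color_eq hvg hvf · hf)
  · exact absurd (eq_of_color_eq hve hvf he hf) hef

end Coloring

section Path

open SimpleGraph

variable {V : Type*} {G : SimpleGraph V} {a b v : V} {p : G.Walk a b}

theorem exists_ne_mem_edges_of_isPath (hp : p.IsPath) (hv : v ∈ p.support) (hva : v ≠ a)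
    (hvb : v ≠ b) : ∃ x y, x ≠ y ∧ s(v, x) ∈ p.edges ∧ s(v, y) ∈ p.edges := by
  obtain ⟨i, rfl, hi⟩ := Walk.mem_support_iff_exists_getVert.mp hv
  have i_ne_zero : i ≠ 0 := by
    rintro rfl
    exact hva p.getVert_zero
  have i_lt_length : i < p.length := by
    refine hi.lt_of_ne ?_
    rintro rfl
    exact hvb p.getVert_length
  obtain ⟨x, y, hxy, hneighbors⟩ :=
    Set.ncard_eq_two.mp (hp.ncard_neighborSet_toSubgraph_internal_eq_two i_ne_zero i_lt_length)
  have mem_edges {w : V} (hw : w ∈ ({x, y} : Set V)) : s(p.getVert i, w) ∈ p.edges :=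
    Walk.adj_toSubgraph_iff_mem_edges.mp (hneighbors.ge hw)
  exact ⟨x, y, hxy, mem_edges (Or.inl rfl), mem_edges (Or.inr rfl)⟩

namespace IsMaxAltPath

variable {k : ℕ} {χ : Sym2 V → Option (Fin k)} {c₀ c₁ : Fin k}

theorem edgeSet_subset_bichromatic (hp : IsMaxAltPath G χ c₀ c₁ p) :
    p.edgeSet ⊆ bichromatic χ c₀ c₁ :=
  hp.2.2.1

theorem exists_mem_edgeSet (hp : IsMaxAltPath G χ c₀ c₁ p) (hv : v ∈ p.support) :
    ∃ e ∈ p.edgeSet, v ∈ e :=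
  (Walk.mem_support_iff_exists_mem_edges_of_not_nil (Walk.not_nil_of_ne hp.2.1)).mp hv

theorem existsUnique_mem_bichromatic (hp : IsMaxAltPath G χ c₀ c₁ p) (hv : v = a ∨ v = b) :
    ∃! w, s(v, w) ∈ bichromatic χ c₀ c₁ := by
  obtain ⟨-, -, -, ha, hb⟩ := hp
  rcases hv with rfl | rfl
  exacts [ha, hb]

theorem mem_edgeSet_of_mem_bichromatic (hp : IsMaxAltPath G χ c₀ c₁ p)
    (hχ : IsPartialColoring G k χ) (hv : v ∈ p.support) {e : Sym2 V}
    (he : e ∈ bichromatic χ c₀ c₁) (hve : v ∈ e) : e ∈ p.edgeSet := by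
  by_cases hend : v = a ∨ v = b
  · obtain ⟨f, hf, hvf⟩ := hp.exists_mem_edgeSet hv
    obtain ⟨w, rfl⟩ := hve
    obtain ⟨x, rfl⟩ := hvf
    have hwx : w = x :=
      (hp.existsUnique_mem_bichromatic hend).unique he (hp.edgeSet_subset_bichromatic hf)
    exact hwx ▸ hf
  · obtain ⟨hva, hvb⟩ := not_or.mp hend
    obtain ⟨x, y, hxy, hx, hy⟩ := exists_ne_mem_edges_of_isPath hp.1 hv hva hvb
    rcases hχ.eq_or_eq_of_mem_bichromatic (Sym2.mem_mk_left v x) (Sym2.mem_mk_left v y) hve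
      (mt Sym2.congr_right.mp hxy) (hp.edgeSet_subset_bichromatic hx)
      (hp.edgeSet_subset_bichromatic hy) he with rfl | rfl
    exacts [hx, hy]

theorem isKempeClosed_edgeSet (hp : IsMaxAltPath G χ c₀ c₁ p) (hχ : IsPartialColoring G k χ) :
    IsKempeClosed χ c₀ c₁ p.edgeSet := by
  intro v
  by_cases hv : v ∈ p.support
  · exact Or.inl fun _ => hp.mem_edgeSet_of_mem_bichromatic hχ hv
  · exact Or.inr fun e _ hve hep => hv (p.mem_support_of_mem_edges hep hve)

end IsMaxAltPath

end Path

theorem path_flip_general {V : Type*} [DecidableEq V]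
    (G : SimpleGraph V) {k : ℕ}
    (χ : Sym2 V → Option (Fin k)) (hχ : IsPartialColoring G k χ)
    (c₀ c₁ : Fin k) (hc : c₀ ≠ c₁) {a b : V} (p : G.Walk a b)
    (hp : IsMaxAltPath G χ c₀ c₁ p)
    (χ' : Sym2 V → Option (Fin k))
    (hχ' : χ' = fun e =>
      if e ∈ p.edges then (if χ e = some c₀ then some c₁ else some c₀) else χ e) :
    IsPartialColoring G k χ' ∧
    ((∀ e ∈ p.edges, a ∈ e → χ e = some c₀) →
      c₀ ∈ missing χ' a ∧ c₁ ∉ missing χ' a) ∧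
    ((∀ e ∈ p.edges, b ∈ e → χ e = some c₀) →
      c₀ ∈ missing χ' b ∧ c₁ ∉ missing χ' b) := by
  have flip_eq : χ' = kempeSwap χ c₀ c₁ p.edgeSet :=
    hχ'.trans (kempeSwap_eq_ite (S := {e | e ∈ p.edges}) hp.edgeSet_subset_bichromatic).symm
  have missing_of_mem_support {v : V} (hv : v ∈ p.support)
      (hcolor : ∀ e ∈ p.edges, v ∈ e → χ e = some c₀) :
      c₀ ∈ missing χ' v ∧ c₁ ∉ missing χ' v :=
    flip_eq ▸ mem_and_notMem_missing_kempeSwap hc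
      (fun _ => hp.mem_edgeSet_of_mem_bichromatic hχ hv) (hp.exists_mem_edgeSet hv) hcolor
  exact ⟨flip_eq ▸ hχ.kempeSwap (hp.isKempeClosed_edgeSet hχ),
    missing_of_mem_support p.start_mem_support, missing_of_mem_support p.end_mem_support⟩

/-- Flipping a maximal `(c₀,c₁)`-alternating path `P` (swapping the colors `c₀` and `c₁` on
the edges of `P` and leaving all other edges unchanged) yields a partial `k`-edge-coloring.
Moreover, for an endpoint of `P` whose unique `P`-edge is colored `c₀` under `χ`, after the
flip the color `c₀` is missing at that endpoint and `c₁` is not. -/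
theorem path_flip {V : Type*} [Fintype V] [DecidableEq V]
    (G : SimpleGraph V) {k : ℕ}
    (χ : Sym2 V → Option (Fin k)) (hχ : IsPartialColoring G k χ)
    (c₀ c₁ : Fin k) (hc : c₀ ≠ c₁) {a b : V} (p : G.Walk a b)
    (hp : IsMaxAltPath G χ c₀ c₁ p)
    (χ' : Sym2 V → Option (Fin k))
    (hχ' : χ' = fun e =>
      if e ∈ p.edges then (if χ e = some c₀ then some c₁ else some c₀) else χ e) :
    IsPartialColoring G k χ' ∧
    ((∀ e ∈ p.edges, a ∈ e → χ e = some c₀) →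
      c₀ ∈ missing χ' a ∧ c₁ ∉ missing χ' a) ∧
    ((∀ e ∈ p.edges, b ∈ e → χ e = some c₀) →
      c₀ ∈ missing χ' b ∧ c₁ ∉ missing χ' b) := by
  exact path_flip_general G χ hχ c₀ c₁ hc p hp χ' hχ'

end EC
end

section
/- Let χ be a partial k-edge-coloring of G and let MP denote the set of all maximal alternating paths of G under χ (over all pairs of distinct colors in {1,…,k}). Then Σ_{P ∈ MP} |I(P)| ≤ Σ_{e colored by χ} w(e), i.e., the total number of internal edges over all maximal alternating paths is at most the sum of the weights of the colored edges. -/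
namespace EC

open Classical

/-- `x = (q, S)` represents a maximal alternating path of `G` under `χ`: `q` is an unordered
pair of distinct colors `{c₀, c₁}` and `S` is the edge set of a maximal `(c₀,c₁)`-alternating
path of `G`. -/
def IsMaxAltPathPair {V : Type*} [DecidableEq V] (G : SimpleGraph V) {k : ℕ}
    (χ : Sym2 V → Option (Fin k)) (q : Sym2 (Fin k)) (S : Finset (Sym2 V)) : Prop :=
  ∃ (c₀ c₁ : Fin k) (a b : V) (p : G.Walk a b),
    c₀ ≠ c₁ ∧ q = s(c₀, c₁) ∧ IsMaxAltPath G χ c₀ c₁ p ∧ S = p.edges.toFinset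

/-- `e` is an internal edge of the maximal alternating path represented by `x = (q, S)`:
`e` lies on the path and neither endpoint of `e` is an endpoint of the path. -/
def IsInternalEdgeOf {V : Type*} [DecidableEq V] (G : SimpleGraph V) {k : ℕ}
    (χ : Sym2 V → Option (Fin k)) (q : Sym2 (Fin k)) (S : Finset (Sym2 V))
    (e : Sym2 V) : Prop :=
  ∃ (c₀ c₁ : Fin k) (a b : V) (p : G.Walk a b),
    c₀ ≠ c₁ ∧ q = s(c₀, c₁) ∧ IsMaxAltPath G χ c₀ c₁ p ∧ S = p.edges.toFinset ∧
    e ∈ p.edges ∧ a ∉ e ∧ b ∉ e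

/-- The weight `w(e)` of an edge `e = (u,v)` of `G`: the minimum of the degrees of its two
endpoints. -/
def edgeWeight {V : Type*} [Fintype V] (G : SimpleGraph V) [DecidableRel G.Adj]
    (e : Sym2 V) : ℕ :=
  Sym2.lift ⟨fun u v => min (G.degree u) (G.degree v), fun u v => min_comm _ _⟩ e

/-!
Count pairs `(P, e)` with `e` an internal edge of `P` by the edge `e = uv`. As `u` is not an end
of `P`, the path leaves `u` through a second edge `uw`. The neighbour `w` determines `P`: the
colors of `uv` and `uw` are the two colors of `P`, and a maximal alternating path contains every
edge of its two colors that meets it, so two such paths with the same colors that share a vertex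
coincide. Hence `e` is internal to at most `d(u)` paths, and by symmetry to at most `w(e)`.
-/

section Walk

variable {V : Type*} {G : SimpleGraph V} {a b u : V} {p : G.Walk a b}

lemma exists_mk_mem_edges_of_mem_support (hp : ¬p.Nil) (hu : u ∈ p.support) :
    ∃ v, s(u, v) ∈ p.edges := by
  obtain ⟨e, he, v, rfl⟩ := (p.mem_support_iff_exists_mem_edges_of_not_nil hp).1 hu
  exact ⟨v, he⟩

lemma exists_ne_mk_mem_edges_of_isPath (hp : p.IsPath) (hu : u ∈ p.support) (ha : u ≠ a)
    (hb : u ≠ b) (v : V) : ∃ w ≠ v, s(u, w) ∈ p.edges := by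
  obtain ⟨i, rfl, hi⟩ := SimpleGraph.Walk.mem_support_iff_exists_getVert.1 hu
  have hi_ne_zero : i ≠ 0 := by
    rintro rfl
    exact ha p.getVert_zero
  have hi_ne_length : i ≠ p.length := by
    rintro rfl
    exact hb p.getVert_length
  have two_neighbors : 1 < (p.toSubgraph.neighborSet (p.getVert i)).ncard := by
    rw [hp.ncard_neighborSet_toSubgraph_internal_eq_two hi_ne_zero (by lia)]
    exact one_lt_two
  obtain ⟨w, hw, hwv⟩ := Set.exists_ne_of_one_lt_ncard two_neighbors v
  exact ⟨w, hwv, SimpleGraph.Walk.adj_toSubgraph_iff_mem_edges.1 hw⟩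

lemma mem_of_mem_support_of_forall_mem_edges {S : Set V}
    (hS : ∀ x y, s(x, y) ∈ p.edges → x ∈ S → y ∈ S) {v : V} (hu : u ∈ p.support) (huS : u ∈ S)
    (hv : v ∈ p.support) : v ∈ S := by
  by_contra hvS
  obtain ⟨d, hd, hfst, hsnd⟩ :=
    ((p.takeUntil u hu).reverse.append (p.takeUntil v hv)).exists_boundary_dart S huS hvS
  have hd_edge : d.edge ∈ p.edges := by
    have hmem := List.mem_map_of_mem (f := SimpleGraph.Dart.edge) hd
    rw [← SimpleGraph.Walk.edges, SimpleGraph.Walk.edges_append,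
      SimpleGraph.Walk.edges_reverse, List.mem_append, List.mem_reverse] at hmem
    exact hmem.elim (p.edges_takeUntil_subset_edges hu ·) (p.edges_takeUntil_subset_edges hv ·)
  exact hsnd (hS _ _ hd_edge hfst)

end Walk

section Coloring

variable {V : Type*} {G : SimpleGraph V} {k : ℕ} {χ : Sym2 V → Option (Fin k)}

lemma IsPartialColoring.eq_of_color_eq (hχ : IsPartialColoring G k χ) {u v w : V} {c : Fin k}
    (hv : χ s(u, v) = some c) (hw : χ s(u, w) = some c) : v = w := by
  by_contra hvw
  have hne : s(u, v) ≠ s(u, w) := fun h => hvw (Sym2.congr_right.1 h)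
  exact hχ.2 _ _ hne ⟨u, Sym2.mem_mk_left u v, Sym2.mem_mk_left u w⟩ c hv hw

namespace IsMaxAltPath

variable {c₀ c₁ : Fin k} {a b a' b' : V} {p : G.Walk a b} {p' : G.Walk a' b'}

lemma swap (hp : IsMaxAltPath G χ c₀ c₁ p) : IsMaxAltPath G χ c₁ c₀ p := by
  simpa only [IsMaxAltPath, or_comm] using hp

lemma color_eq_or_eq (hp : IsMaxAltPath G χ c₀ c₁ p) {e : Sym2 V} (he : e ∈ p.edges) :
    χ e = some c₀ ∨ χ e = some c₁ :=
  hp.2.2.1 e he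

lemma not_nil (hp : IsMaxAltPath G χ c₀ c₁ p) : ¬p.Nil :=
  SimpleGraph.Walk.not_nil_of_ne hp.2.1

lemma map_some_eq_mk_colors (hχ : IsPartialColoring G k χ) (hp : IsMaxAltPath G χ c₀ c₁ p)
    {u v w : V} (hvw : v ≠ w) (hv : s(u, v) ∈ p.edges) (hw : s(u, w) ∈ p.edges) :
    s(c₀, c₁).map some = s(χ s(u, v), χ s(u, w)) := by
  rcases hp.color_eq_or_eq hv with hcv | hcv <;> rcases hp.color_eq_or_eq hw with hcw | hcw
  · exact absurd (hχ.eq_of_color_eq hcv hcw) hvw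
  · rw [hcv, hcw, Sym2.map_mk]
  · rw [hcv, hcw, Sym2.map_mk, Sym2.eq_swap]
  · exact absurd (hχ.eq_of_color_eq hcv hcw) hvw

lemma mem_edges_of_mem_support (hχ : IsPartialColoring G k χ) (hp : IsMaxAltPath G χ c₀ c₁ p)
    {x y : V} (hx : x ∈ p.support) (hxy : χ s(x, y) = some c₀ ∨ χ s(x, y) = some c₁) :
    s(x, y) ∈ p.edges := by
  obtain ⟨v, hv⟩ := exists_mk_mem_edges_of_mem_support hp.not_nil hx
  have ⟨hpath, _, _, ha, hb⟩ := hp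
  rcases eq_or_ne x a with rfl | hxa
  · rwa [ha.unique hxy (hp.color_eq_or_eq hv)]
  rcases eq_or_ne x b with rfl | hxb
  · rwa [hb.unique hxy (hp.color_eq_or_eq hv)]
  obtain ⟨w, hwv, hw⟩ := exists_ne_mk_mem_edges_of_isPath hpath hx hxa hxb v
  have hcolors := hp.map_some_eq_mk_colors hχ hwv.symm hv hw
  obtain ⟨c, hc, hcxy⟩ : ∃ c ∈ s(c₀, c₁), χ s(x, y) = some c := by simpa using hxy
  have hmem : some c ∈ s(χ s(x, v), χ s(x, w)) := hcolors ▸ Sym2.mem_map.2 ⟨c, hc, rfl⟩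
  rcases Sym2.mem_iff.1 hmem with hcv | hcw
  · rwa [hχ.eq_of_color_eq hcxy hcv.symm]
  · rwa [hχ.eq_of_color_eq hcxy hcw.symm]

lemma edges_subset_edges (hχ : IsPartialColoring G k χ) (hp : IsMaxAltPath G χ c₀ c₁ p)
    (hp' : IsMaxAltPath G χ c₀ c₁ p') {x : V} (hx : x ∈ p.support) (hx' : x ∈ p'.support) :
    p.edges ⊆ p'.edges := by
  have hclosed : ∀ u v, s(u, v) ∈ p.edges → u ∈ p'.support → s(u, v) ∈ p'.edges :=
    fun u v huv hu => hp'.mem_edges_of_mem_support hχ hu (hp.color_eq_or_eq huv)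
  rintro ⟨u, v⟩ huv
  exact hclosed u v huv (mem_of_mem_support_of_forall_mem_edges (S := {z | z ∈ p'.support})
    (fun y z hyz hy => p'.snd_mem_support_of_mem_edges (hclosed y z hyz hy))
    hx hx' (p.fst_mem_support_of_mem_edges huv))

lemma edges_toFinset_eq [DecidableEq V] (hχ : IsPartialColoring G k χ)
    (hp : IsMaxAltPath G χ c₀ c₁ p) (hp' : IsMaxAltPath G χ c₀ c₁ p') {x : V}
    (hx : x ∈ p.support) (hx' : x ∈ p'.support) : p.edges.toFinset = p'.edges.toFinset := by
  ext e
  simp only [List.mem_toFinset]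
  exact ⟨(hp.edges_subset_edges hχ hp' hx hx' ·), (hp'.edges_subset_edges hχ hp hx' hx ·)⟩

end IsMaxAltPath

namespace IsInternalEdgeOf

variable [DecidableEq V] {q : Sym2 (Fin k)} {S S' : Finset (Sym2 V)} {e : Sym2 V}

lemma mem_edgeSet (h : IsInternalEdgeOf G χ q S e) : e ∈ G.edgeSet := by
  obtain ⟨c₀, c₁, a, b, p, -, -, -, -, he, -, -⟩ := h
  exact p.edges_subset_edgeSet he

lemma color_ne_none (h : IsInternalEdgeOf G χ q S e) : χ e ≠ none := by
  obtain ⟨c₀, c₁, a, b, p, -, -, hp, -, he, -, -⟩ := h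
  rcases hp.color_eq_or_eq he with hc | hc <;> simp [hc]

lemma edges_unique (hχ : IsPartialColoring G k χ) (h : IsInternalEdgeOf G χ q S e)
    (h' : IsInternalEdgeOf G χ q S' e) : S = S' := by
  obtain ⟨c₀, c₁, a, b, p, -, rfl, hp, rfl, he, -, -⟩ := h
  obtain ⟨d₀, d₁, a', b', p', -, hq, hp', rfl, he', -, -⟩ := h'
  have hp'_colors : IsMaxAltPath G χ c₀ c₁ p' := by
    rcases Sym2.eq_iff.1 hq with ⟨rfl, rfl⟩ | ⟨rfl, rfl⟩
    · exact hp'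
    · exact hp'.swap
  induction e with | _ u v =>
  exact hp.edges_toFinset_eq hχ hp'_colors (p.fst_mem_support_of_mem_edges he)
    (p'.fst_mem_support_of_mem_edges he')

lemma exists_adj_map_some_eq_mk_colors (hχ : IsPartialColoring G k χ) {u v : V}
    (h : IsInternalEdgeOf G χ q S s(u, v)) :
    ∃ w, G.Adj u w ∧ q.map some = s(χ s(u, v), χ s(u, w)) := by
  obtain ⟨c₀, c₁, a, b, p, -, rfl, hp, -, hv, ha, hb⟩ := h
  have hua : u ≠ a := fun h => ha (h ▸ Sym2.mem_mk_left u v)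
  have hub : u ≠ b := fun h => hb (h ▸ Sym2.mem_mk_left u v)
  obtain ⟨w, hwv, hw⟩ := exists_ne_mk_mem_edges_of_isPath hp.1
    (p.fst_mem_support_of_mem_edges hv) hua hub v
  exact ⟨w, p.adj_of_mem_edges hw, hp.map_some_eq_mk_colors hχ hwv.symm hv hw⟩

end IsInternalEdgeOf

lemma encard_setOf_isInternalEdgeOf_le_encard_neighborSet [DecidableEq V]
    (hχ : IsPartialColoring G k χ) (u v : V) :
    {x : Sym2 (Fin k) × Finset (Sym2 V) | IsInternalEdgeOf G χ x.1 x.2 s(u, v)}.encard ≤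
      (G.neighborSet u).encard := by
  have : Nonempty V := ⟨u⟩
  choose! f hf_adj hf_colors using
    fun (x : Sym2 (Fin k) × Finset (Sym2 V)) (hx : IsInternalEdgeOf G χ x.1 x.2 s(u, v)) =>
      hx.exists_adj_map_some_eq_mk_colors hχ
  refine Set.encard_le_encard_of_injOn (f := f) hf_adj ?_
  rintro ⟨q, S⟩ hx ⟨r, T⟩ hy hxy
  obtain rfl : q = r := Sym2.map.injective (Option.some_injective _) <| by
    rw [hf_colors _ hx, hf_colors _ hy, hxy]
  exact congrArg (Prod.mk q) (IsInternalEdgeOf.edges_unique hχ hx hy)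

variable [Fintype V] [DecidableEq V] [DecidableRel G.Adj]

lemma card_le_edgeWeight_of_forall_isInternalEdgeOf (hχ : IsPartialColoring G k χ) {e : Sym2 V}
    {A : Finset (Sym2 (Fin k) × Finset (Sym2 V))}
    (hA : ∀ x ∈ A, IsInternalEdgeOf G χ x.1 x.2 e) : A.card ≤ edgeWeight G e := by
  have card_le_degree : ∀ u v, e = s(u, v) → A.card ≤ G.degree u := by
    rintro u v rfl
    have hcard : (A : Set (Sym2 (Fin k) × Finset (Sym2 V))).encard ≤ (G.neighborSet u).encard :=
      (Set.encard_le_encard hA).trans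
        (encard_setOf_isInternalEdgeOf_le_encard_neighborSet hχ u v)
    rwa [Set.encard_coe_eq_coe_finsetCard, ← G.coe_neighborFinset,
      Set.encard_coe_eq_coe_finsetCard, G.card_neighborFinset_eq_degree, Nat.cast_le] at hcard
  induction e with | _ u v =>
  exact le_min (card_le_degree u v rfl) (card_le_degree v u Sym2.eq_swap)

lemma ncard_setOf_isInternalEdgeOf (q : Sym2 (Fin k)) (S : Finset (Sym2 V)) :
    {e : Sym2 V | IsInternalEdgeOf G χ q S e}.ncard =
      ((G.edgeFinset.filter (fun e => χ e ≠ none)).filter (IsInternalEdgeOf G χ q S)).card := by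
  rw [← Set.ncard_coe_finset]
  congr 1
  ext e
  simp only [Set.mem_ofPred_eq, Finset.coe_filter, Finset.mem_filter, SimpleGraph.mem_edgeFinset]
  exact ⟨fun h => ⟨⟨h.mem_edgeSet, h.color_ne_none⟩, h⟩, And.right⟩

end Coloring

/-- The total number of internal edges, summed over all maximal alternating paths of `G`
under `χ` (over all pairs of distinct colors), is at most the sum of the weights of the
colored edges. -/
theorem sum_internal_le_sum_weight {V : Type*} [Fintype V] [DecidableEq V]
    (G : SimpleGraph V) [DecidableRel G.Adj] {k : ℕ}
    (χ : Sym2 V → Option (Fin k)) (hχ : IsPartialColoring G k χ) :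
    ∑ x ∈ (Set.toFinite {x : Sym2 (Fin k) × Finset (Sym2 V) |
        IsMaxAltPathPair G χ x.1 x.2}).toFinset,
      {e : Sym2 V | IsInternalEdgeOf G χ x.1 x.2 e}.ncard
      ≤ ∑ e ∈ G.edgeFinset.filter (fun e => χ e ≠ none), edgeWeight G e := by
  let IsInternal (x : Sym2 (Fin k) × Finset (Sym2 V)) (e : Sym2 V) : Prop :=
    IsInternalEdgeOf G χ x.1 x.2 e
  set P := (Set.toFinite {x : Sym2 (Fin k) × Finset (Sym2 V) |
    IsMaxAltPathPair G χ x.1 x.2}).toFinset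
  set C := G.edgeFinset.filter (fun e => χ e ≠ none)
  calc ∑ x ∈ P, {e : Sym2 V | IsInternalEdgeOf G χ x.1 x.2 e}.ncard
      = ∑ x ∈ P, (C.bipartiteAbove IsInternal x).card :=
        Finset.sum_congr rfl fun x _ => ncard_setOf_isInternalEdgeOf x.1 x.2
    _ = ∑ e ∈ C, (P.bipartiteBelow IsInternal e).card :=
        Finset.sum_card_bipartiteAbove_eq_sum_card_bipartiteBelow IsInternal
    _ ≤ ∑ e ∈ C, edgeWeight G e :=
        Finset.sum_le_sum fun e _ => card_le_edgeWeight_of_forall_isInternalEdgeOf hχ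
          fun x hx => (Finset.mem_filter.1 hx).2

end EC
end
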